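/- Let Ω ⊂ ℂ be a bounded, open, simply connected set whose frontier Γ = ∂Ω equals the image of an injective, twice continuously differentiable map γ : S¹ → ℂ. Fix φ ∈ [0, 2π) and let u : closure(Ω) → ℝ be continuous on closure(Ω), harmonic on Ω, with boundary values u(γ(e^{iθ})) = cos(θ − φ) for all θ. Then u has no critical points in Ω: the gradient ∇u(p) ≠ 0 for every p ∈ Ω. -/

import Mathlib

open Complex Metric Set

/-- A real-valued function on `ℂ ≅ ℝ²` is harmonic on an open set `U` if it is twice
continuously differentiable on `U` and its Laplacian vanishes identically on `U`. -/
def HarmonicOnSet (f : ℂ → ℝ) (U : Set ℂ) : Prop :=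
  ContDiffOn ℝ 2 f U ∧
    ∀ p ∈ U,
      fderiv ℝ (fun z => fderiv ℝ f z 1) p 1 +
        fderiv ℝ (fun z => fderiv ℝ f z Complex.I) p Complex.I = 0

/-! At a critical point `p` a non-constant harmonic function looks like `u p + Re (ζ ^ n)` with
`n ≥ 2`, so around `p` sectors with `u < u p` and sectors with `u > u p` alternate. By the
maximum principle every component of a sublevel set reaches the boundary, where the sublevel
sets of the cosine are arcs; hence two low sectors are joined by a connected set on which
`u < u p`, and likewise two high sectors by one on which `u > u p`. In the plane such sets must cross.
The crossing is detected by a square root of `(z - ρ) / (z + ρ)`, which exists off any connected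
set containing `±ρ`, but changes sign around a symmetric loop separating `ρ` from `-ρ`. -/

open Filter Topology ComplexConjugate InnerProductSpace

/-! ### Crossing connected sets in the plane -/

theorem eventually_exists_continuousOn_exp_mul_sub_eq {K : Set ℂ} (hK : IsClosed K) {b : ℂ}
    (hb : b ∉ K) :
    ∀ᶠ a in 𝓝 b, ∃ L : ℂ → ℂ, ContinuousOn L K ∧ ∀ z ∈ K, exp (L z) * (z - b) = z - a := by
  obtain ⟨ε, hε, hball⟩ := Metric.isOpen_iff.1 hK.isOpen_compl b hb
  filter_upwards [ball_mem_nhds b hε] with a ha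
  have hne : ∀ z ∈ K, z - b ≠ 0 := fun z hz h => hb (sub_eq_zero.1 h ▸ hz)
  have hslit : ∀ z ∈ K, (z - a) / (z - b) ∈ slitPlane := by
    intro z hz
    have hfar : ε ≤ ‖z - b‖ := not_lt.1 fun h => hball (mem_ball_iff_norm.2 h) hz
    have heq : (z - a) / (z - b) = 1 + -(a - b) / (z - b) := by
      have := hne z hz
      field_simp
      ring
    rw [heq]
    apply mem_slitPlane_of_norm_lt_one
    rw [norm_div, norm_neg, div_lt_one (hε.trans_le hfar)]
    exact (mem_ball_iff_norm.1 ha).trans_le hfar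
  refine ⟨fun z => log ((z - a) / (z - b)), ?_, fun z hz => ?_⟩
  · exact ContinuousOn.clog (by fun_prop (disch := assumption)) hslit
  · rw [exp_log (slitPlane_ne_zero (hslit z hz)), div_mul_cancel₀ _ (hne z hz)]

theorem exists_continuousOn_exp_mul_sub_eq {K S : Set ℂ} (hK : IsClosed K) (hS : IsPreconnected S)
    (hSK : Disjoint S K) {a b : ℂ} (ha : a ∈ S) (hb : b ∈ S) :
    ∃ L : ℂ → ℂ, ContinuousOn L K ∧ ∀ z ∈ K, exp (L z) * (z - b) = z - a := by
  refine hS.induction₂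
    (fun b a => ∃ L : ℂ → ℂ, ContinuousOn L K ∧ ∀ z ∈ K, exp (L z) * (z - b) = z - a)
    (fun b hb => nhdsWithin_le_nhds
      (eventually_exists_continuousOn_exp_mul_sub_eq hK (disjoint_left.1 hSK hb))) ?_ ?_ hb ha
  · rintro x y w - - - ⟨L, hL, hLz⟩ ⟨M, hM, hMz⟩
    refine ⟨fun z => M z + L z, hM.add hL, fun z hz => ?_⟩
    rw [exp_add, mul_assoc, hLz z hz, hMz z hz]
  · rintro x y - - ⟨L, hL, hLz⟩
    refine ⟨fun z => -L z, hL.neg, fun z hz => ?_⟩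
    rw [← hLz z hz, ← mul_assoc, ← exp_add, neg_add_cancel, exp_zero, one_mul]

theorem re_ne_zero_of_sq_mul_add_eq_sub {q z : ℂ} {ρ : ℝ} (hz : |ρ| < ‖z‖)
    (h : q ^ 2 * (z + ρ) = z - ρ) : q.re ≠ 0 := by
  intro hre
  have hq : q ^ 2 = ((-q.im ^ 2 : ℝ) : ℂ) := by
    conv_lhs => rw [← re_add_im q, hre]
    push_cast
    linear_combination (q.im : ℂ) ^ 2 * I_sq
  have hscale : ((1 + q.im ^ 2 : ℝ) : ℂ) * z = ((ρ * (1 - q.im ^ 2) : ℝ) : ℂ) := by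
    rw [hq] at h
    push_cast at h ⊢
    linear_combination -h
  have hnorm : (1 + q.im ^ 2) * ‖z‖ = |ρ| * |1 - q.im ^ 2| := by
    have := congrArg norm hscale
    rwa [norm_mul, norm_real, norm_real, Real.norm_of_nonneg (by positivity), Real.norm_eq_abs,
      abs_mul] at this
  have habs : |1 - q.im ^ 2| ≤ 1 + q.im ^ 2 := by
    rw [abs_le]
    constructor <;> linarith [sq_nonneg q.im]
  nlinarith [mul_le_mul_of_nonneg_left habs (abs_nonneg ρ), sq_nonneg q.im]

/- `z ↦ conj (q (conj z))` satisfies the same equation as `q`, so it is `q` or `-q` along `σ`;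
since `q 0 = ±I` it is `-q`. -/
theorem re_conj_eq_neg_re_of_sq_mul_add_eq_sub {σ K : Set ℂ} (hσ : IsPreconnected σ)
    (hσK : σ ⊆ K) (hσK' : MapsTo conj σ K) (h0 : 0 ∈ σ) {q : ℂ → ℂ} (hq : ContinuousOn q K)
    (hq0 : ∀ z ∈ K, q z ≠ 0) {ρ : ℝ} (hρ : ρ ≠ 0)
    (hqz : ∀ z ∈ K, q z ^ 2 * (z + ρ) = z - ρ) {w : ℂ} (hw : w ∈ σ) :
    (q (conj w)).re = -(q w).re := by
  have hne : ∀ z ∈ K, z + ρ ≠ 0 := by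
    intro z hz h
    have h' : z - ρ = 0 := by rw [← hqz z hz, h, mul_zero]
    exact hρ (by exact_mod_cast (by linear_combination (h - h') / 2 : (ρ : ℂ) = 0))
  have hcont : ContinuousOn (fun z => conj (q (conj z))) σ :=
    continuous_conj.comp_continuousOn (hq.comp continuous_conj.continuousOn hσK')
  have hsq : EqOn (q ^ 2) ((fun z => conj (q (conj z))) ^ 2) σ := by
    intro z hz
    have hconj : conj (q (conj z)) ^ 2 * (z + ρ) = z - ρ := by
      simpa using congrArg conj (hqz _ (hσK' hz))
    exact mul_right_cancel₀ (hne z (hσK hz)) ((hqz z (hσK hz)).trans hconj.symm)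
  have hval : q 0 ^ 2 = -1 := by
    have := hqz 0 (hσK h0)
    refine mul_right_cancel₀ (ofReal_ne_zero.2 hρ) ?_
    linear_combination this
  rcases hσ.eq_or_eq_neg_of_sq_eq (hq.mono hσK) hcont hsq
    (fun hz => (map_ne_zero _).2 (hq0 _ (hσK' hz))) with heq | heq
  · have hreal : conj (q 0) = q 0 := by simpa using (heq h0).symm
    obtain ⟨x, hx⟩ := conj_eq_iff_real.1 hreal
    rw [hx] at hval
    have : x ^ 2 = -1 := by exact_mod_cast hval
    nlinarith [sq_nonneg x]
  · have := congrArg re (heq hw)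
    simp only [Pi.neg_apply, neg_re, conj_re] at this
    linarith

/- A connected set avoiding `K` and containing `±ρ` would give a square root `q` of
`(z - ρ) / (z + ρ)` on `K`. Its real part vanishes nowhere on `T`, but takes opposite values at
`w` and `conj w`. -/
theorem not_disjoint_of_conj_symm {S T σ K : Set ℂ} (hS : IsPreconnected S)
    (hT : IsPreconnected T) (hσ : IsPreconnected σ) (hK : IsClosed K) (hTK : T ⊆ K)
    (hσK : σ ⊆ K) (hσK' : MapsTo conj σ K) (h0 : 0 ∈ σ) {w : ℂ} (hwσ : w ∈ σ) (hw : w ∈ T)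
    (hw' : conj w ∈ T) {ρ : ℝ} (hρ : ρ ≠ 0) (hTρ : ∀ z ∈ T, |ρ| < ‖z‖) (hρS : (ρ : ℂ) ∈ S)
    (hρS' : (-ρ : ℂ) ∈ S) : ¬ Disjoint S K := by
  intro hSK
  obtain ⟨L, hL, hLz⟩ := exists_continuousOn_exp_mul_sub_eq hK hS hSK hρS hρS'
  set q : ℂ → ℂ := fun z => exp (L z / 2) with hq_def
  have hq : ContinuousOn q K := continuous_exp.comp_continuousOn (hL.div_const 2)
  have hqz : ∀ z ∈ K, q z ^ 2 * (z + ρ) = z - ρ := by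
    intro z hz
    rw [← hLz z hz, hq_def, ← exp_nat_mul, sub_neg_eq_add]
    push_cast
    rw [mul_div_cancel₀ _ two_ne_zero]
  have hodd : (q (conj w)).re = -(q w).re :=
    re_conj_eq_neg_re_of_sq_mul_add_eq_sub hσ hσK hσK' h0 hq (fun _ _ => exp_ne_zero _) hρ hqz hwσ
  have himage : OrdConnected ((fun z => (q z).re) '' T) :=
    (hT.image _ (continuous_re.comp_continuousOn (hq.mono hTK))).ordConnected
  have hzero : (0 : ℝ) ∈ uIcc (q w).re (q (conj w)).re := by
    rw [hodd, mem_uIcc]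
    rcases le_total 0 (q w).re with h | h
    · exact Or.inr ⟨neg_nonpos.2 h, h⟩
    · exact Or.inl ⟨h, neg_nonneg.2 h⟩
  obtain ⟨z, hz, hre⟩ := himage.uIcc_subset (mem_image_of_mem _ hw) (mem_image_of_mem _ hw') hzero
  exact re_ne_zero_of_sq_mul_add_eq_sub (hTρ z hz) (hqz z (hTK hz)) hre

theorem im_nonneg_of_mem_wedge {ω z : ℂ} (hre : 0 ≤ ω.re) (him : 0 ≤ ω.im) {R : ℝ} (hR : 0 ≤ R)
    (hz : z ∈ segment ℝ 0 (R * ω) ∪ segment ℝ 0 (R * conj ω)) : 0 ≤ (ω * z).im := by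
  have hconvex : Convex ℝ {z : ℂ | 0 ≤ (ω * z).im} :=
    (convex_halfSpace_im_ge 0).linear_preimage (LinearMap.mulLeft ℝ ω)
  have hω : (ω * (R * ω)).im = R * (2 * (ω.re * ω.im)) := by
    simp only [mul_im, mul_re, ofReal_re, ofReal_im]
    ring
  have hω' : (ω * (R * conj ω)).im = 0 := by
    rw [mul_left_comm, mul_conj, ← ofReal_mul, ofReal_im]
  rcases hz with hz | hz
  · refine hconvex.segment_subset (by simp) ?_ hz
    rw [mem_ofPred_eq, hω]
    positivity
  · exact hconvex.segment_subset (by simp) hω'.ge hz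

theorem im_neg_of_mem_segment {ω z : ℂ} (hω : ‖ω‖ = 1) (him : 0 < ω.im) {ρ : ℝ} (hρ : 0 < ρ)
    (hz : z ∈ segment ℝ (-ρ : ℂ) (ρ * conj ω ^ 2)) : (ω * z).im < 0 := by
  have hconvex : Convex ℝ {z : ℂ | (ω * z).im < 0} :=
    (convex_halfSpace_im_lt 0).linear_preimage (LinearMap.mulLeft ℝ ω)
  have hρω : 0 < ρ * ω.im := mul_pos hρ him
  have hrot : ω * (ρ * conj ω ^ 2) = ρ * conj ω := by
    have hunit : ω * conj ω = 1 := by rw [mul_conj, normSq_eq_norm_sq, hω]; simp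
    linear_combination ρ * conj ω * hunit
  refine hconvex.segment_subset ?_ ?_ hz
  · simpa [mul_comm] using hρω
  · rw [mem_ofPred_eq, hrot]
    simpa using hρω

/- The points `-ρ` and `ρ * conj ω ^ 2` both satisfy `Im (ω * z) < 0`, while `Im (ω * z) ≥ 0` on the
wedge; joining them by a segment reduces the claim to the symmetric pair `±ρ`. -/
theorem eventually_not_disjoint_wedge {T : Set ℂ} (hTc : IsClosed T) (hT : IsPreconnected T)
    (h0 : 0 ∉ T) {ω : ℂ} (hω : ‖ω‖ = 1) (hre : 0 ≤ ω.re) (him : 0 < ω.im) {R : ℝ} (hR : 0 ≤ R)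
    (hw : R * ω ∈ T) (hw' : R * conj ω ∈ T) :
    ∀ᶠ ρ : ℝ in 𝓝[>] 0, ∀ S : Set ℂ, IsPreconnected S → (ρ : ℂ) ∈ S → ρ * conj ω ^ 2 ∈ S →
      ¬ Disjoint S (T ∪ (segment ℝ 0 (R * ω) ∪ segment ℝ 0 (R * conj ω))) := by
  obtain ⟨ε, hε, hball⟩ := Metric.isOpen_iff.1 hTc.isOpen_compl 0 h0
  filter_upwards [nhdsWithin_le_nhds (Iio_mem_nhds hε), self_mem_nhdsWithin]
    with ρ (hρε : ρ < ε) (hρ : 0 < ρ) S hS ha hb hSK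
  have hTρ : ∀ z ∈ T, ρ < ‖z‖ := fun z hz => not_le.1 fun h =>
    hball (mem_ball_zero_iff.2 (h.trans_lt hρε)) hz
  have hJball : segment ℝ (-ρ : ℂ) (ρ * conj ω ^ 2) ⊆ closedBall 0 ρ :=
    (convex_closedBall 0 ρ).segment_subset (by simp [abs_of_pos hρ])
      (by simp [hω, abs_of_pos hρ])
  have hJ : Disjoint (segment ℝ (-ρ : ℂ) (ρ * conj ω ^ 2))
      (T ∪ (segment ℝ 0 (R * ω) ∪ segment ℝ 0 (R * conj ω))) := by
    rw [disjoint_left]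
    rintro z hz (hzT | hzW)
    · exact (mem_closedBall_zero_iff.1 (hJball hz)).not_gt (hTρ z hzT)
    · exact (im_neg_of_mem_segment hω him hρ hz).not_ge (im_nonneg_of_mem_wedge hre him.le hR hzW)
  have hseg : ∀ w : ℂ, IsClosed (segment ℝ 0 w) := fun w => by
    rw [← convexHull_pair]
    exact ((finite_singleton w).insert 0).isClosed_convexHull ℝ
  have hconj : MapsTo conj (segment ℝ 0 (R * ω)) (segment ℝ 0 (R * conj ω)) := by
    rw [segment_eq_image, segment_eq_image]
    rintro _ ⟨x, hx, rfl⟩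
    exact ⟨x, hx, by simp⟩
  refine not_disjoint_of_conj_symm (σ := segment ℝ 0 (R * ω))
    (hS.union _ hb (right_mem_segment ℝ _ _) (convex_segment _ _).isPreconnected) hT
    (convex_segment _ _).isPreconnected (hTc.union ((hseg _).union (hseg _))) subset_union_left
    (subset_union_left.trans subset_union_right)
    (fun z hz => Or.inr (Or.inr (hconj hz))) (left_mem_segment ℝ _ _) (right_mem_segment ℝ _ _)
    hw (by simpa using hw') hρ.ne' (by rwa [abs_of_pos hρ]) (Or.inl ha)
    (Or.inr (left_mem_segment ℝ _ _)) (disjoint_union_left.2 ⟨hSK, hJ⟩)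

theorem exists_unit_pow_eq_neg_one {n : ℕ} (hn : 2 ≤ n) :
    ∃ ω : ℂ, ω ^ n = -1 ∧ ‖ω‖ = 1 ∧ 0 ≤ ω.re ∧ 0 < ω.im := by
  have hn' : (2 : ℝ) ≤ n := by exact_mod_cast hn
  have hangle : Real.pi / n ≤ Real.pi / 2 := by gcongr
  have hpos : 0 < Real.pi / n := by positivity
  refine ⟨exp ((Real.pi / n : ℝ) * I), ?_, norm_exp_ofReal_mul_I _, ?_, ?_⟩
  · have hne : (n : ℂ) ≠ 0 := by exact_mod_cast (by lia : n ≠ 0)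
    rw [← exp_nat_mul, ← exp_pi_mul_I]
    push_cast
    rw [← mul_assoc, mul_div_cancel₀ _ hne]
  · rw [exp_ofReal_mul_I_re]
    exact Real.cos_nonneg_of_neg_pi_div_two_le_of_le (by linarith) hangle
  · rw [exp_ofReal_mul_I_im]
    exact Real.sin_pos_of_pos_of_lt_pi hpos (by linarith [Real.pi_pos])

/-! ### Sublevel sets and the minimum principle -/

/-- Any two points of `D` at which `u < c` lie in a common closed connected set on which `u ≤ c`.
The connecting set may leave `D`. For `D` open with compact closure it is sought in the closure, and
the passage from `<` to `≤` makes it closed. -/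
def JoinedSublevels {X : Type*} [TopologicalSpace X] (u : X → ℝ) (D : Set X) : Prop :=
  ∀ c, ∀ x ∈ D, ∀ y ∈ D, u x < c → u y < c →
    ∃ T, IsClosed T ∧ IsPreconnected T ∧ x ∈ T ∧ y ∈ T ∧ ∀ z ∈ T, u z ≤ c

theorem JoinedSublevels.comp_homeomorph {X Y : Type*} [TopologicalSpace X] [TopologicalSpace Y]
    {u : Y → ℝ} {D : Set Y} (h : JoinedSublevels u D) (A : X ≃ₜ Y) :
    JoinedSublevels (u ∘ A) (A ⁻¹' D) := by
  intro c x hx y hy hxc hyc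
  obtain ⟨T, hTc, hT, hxT, hyT, hTu⟩ := h c (A x) hx (A y) hy hxc hyc
  exact ⟨A ⁻¹' T, hTc.preimage A.continuous, A.isPreconnected_preimage.2 hT, hxT, hyT,
    fun z hz => hTu _ hz⟩

theorem isClosed_connectedComponentIn {X : Type*} [TopologicalSpace X] {F : Set X}
    (hF : IsClosed F) (x : X) : IsClosed (connectedComponentIn F x) := by
  by_cases hx : x ∈ F
  · refine isClosed_of_closure_subset
      (isPreconnected_connectedComponentIn.closure.subset_connectedComponentIn
        (subset_closure (mem_connectedComponentIn hx))
        (closure_minimal (connectedComponentIn_subset F x) hF))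
  · rw [connectedComponentIn_eq_empty hx]
    exact isClosed_empty

section Sublevels

variable {X : Type*} [TopologicalSpace X] [LocallyConnectedSpace X] {Ω : Set X} {u : X → ℝ}

/- Otherwise the minimum of `u` over the component would be a local minimum in `Ω`. -/
theorem exists_mem_connectedComponentIn_frontier (hΩo : IsOpen Ω) (hΩc : IsCompact (closure Ω))
    (hu : ContinuousOn u (closure Ω)) (hmin : ∀ m ∈ Ω, ¬ IsLocalMin u m) {c : ℝ}
    {x : X} (hx : x ∈ Ω) (hxc : u x < c) :
    ∃ y ∈ connectedComponentIn {z ∈ closure Ω | u z ≤ c} x, y ∈ frontier Ω := by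
  set F : Set X := {z ∈ closure Ω | u z ≤ c}
  have hF : IsClosed F := hu.preimage_isClosed_of_isClosed isClosed_closure isClosed_Iic
  have hxC : x ∈ connectedComponentIn F x := mem_connectedComponentIn ⟨subset_closure hx, hxc.le⟩
  have hCF : connectedComponentIn F x ⊆ F := connectedComponentIn_subset F x
  have hCcl : connectedComponentIn F x ⊆ closure Ω := hCF.trans (sep_subset _ _)
  obtain ⟨m, hm, hmin_m⟩ := (hΩc.of_isClosed_subset (isClosed_connectedComponentIn hF x)
    hCcl).exists_isMinOn ⟨x, hxC⟩ (hu.mono hCcl)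
  by_contra! hne
  have hmΩ : m ∈ Ω := by
    by_contra h
    exact hne m hm (hΩo.frontier_eq ▸ ⟨hCcl hm, h⟩)
  have hVopen : IsOpen (Ω ∩ u ⁻¹' Iio c) :=
    (hu.mono subset_closure).isOpen_inter_preimage hΩo isOpen_Iio
  have hmV : m ∈ Ω ∩ u ⁻¹' Iio c := ⟨hmΩ, (hmin_m hxC).trans_lt hxc⟩
  have hVC : connectedComponentIn (Ω ∩ u ⁻¹' Iio c) m ⊆ connectedComponentIn F x := by
    rw [connectedComponentIn_eq hm]
    exact connectedComponentIn_mono m fun z hz => ⟨subset_closure hz.1, hz.2.le⟩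
  apply hmin m hmΩ
  filter_upwards [hVopen.connectedComponentIn.mem_nhds (mem_connectedComponentIn hmV)] with z hz
  exact hmin_m (hVC hz)

theorem joinedSublevels_of_isPreconnected_frontier (hΩo : IsOpen Ω) (hΩc : IsCompact (closure Ω))
    (hu : ContinuousOn u (closure Ω)) (hmin : ∀ m ∈ Ω, ¬ IsLocalMin u m)
    (hfr : ∀ c, IsPreconnected {z ∈ frontier Ω | u z ≤ c}) : JoinedSublevels u Ω := by
  intro c x hx y hy hxc hyc
  set F : Set X := {z ∈ closure Ω | u z ≤ c}
  have hF : IsClosed F := hu.preimage_isClosed_of_isClosed isClosed_closure isClosed_Iic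
  have hfrF : {z ∈ frontier Ω | u z ≤ c} ⊆ F := fun z hz => ⟨frontier_subset_closure hz.1, hz.2⟩
  obtain ⟨a, haC, ha⟩ := exists_mem_connectedComponentIn_frontier hΩo hΩc hu hmin hx hxc
  obtain ⟨b, hbC, hb⟩ := exists_mem_connectedComponentIn_frontier hΩo hΩc hu hmin hy hyc
  have hbx : b ∈ connectedComponentIn F x := by
    rw [connectedComponentIn_eq haC]
    exact (hfr c).subset_connectedComponentIn ⟨ha, (connectedComponentIn_subset F x haC).2⟩ hfrF
      ⟨hb, (connectedComponentIn_subset F y hbC).2⟩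
  refine ⟨connectedComponentIn F x, isClosed_connectedComponentIn hF x,
    isPreconnected_connectedComponentIn, mem_connectedComponentIn ⟨subset_closure hx, hxc.le⟩, ?_,
    fun z hz => (connectedComponentIn_subset F x hz).2⟩
  rw [connectedComponentIn_eq hbx, ← connectedComponentIn_eq hbC]
  exact mem_connectedComponentIn ⟨subset_closure hy, hyc.le⟩

end Sublevels

/-! ### Critical points of harmonic functions -/

/-- Along every ray `t ↦ t * w` from the origin, `v - v 0` is asymptotic to the harmonic polynomial
`Re (ζ ^ n)`. It encodes that `v - v 0` has order `n` at the origin; the error need not be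
uniform in `w`. -/
def HasRadialLeadingTerm (v : ℂ → ℝ) (n : ℕ) : Prop :=
  ∀ w : ℂ, Tendsto (fun t : ℝ => (v (t * w) - v 0) / t ^ n) (𝓝[>] 0) (𝓝 (w ^ n).re)

namespace HasRadialLeadingTerm

variable {v : ℂ → ℝ} {n : ℕ} {w : ℂ}

theorem eventually_gt (hv : HasRadialLeadingTerm v n) (hw : 0 < (w ^ n).re) :
    ∀ᶠ t : ℝ in 𝓝[>] 0, v 0 < v (t * w) := by
  filter_upwards [(hv w).eventually_const_lt hw, self_mem_nhdsWithin] with t ht (ht0 : 0 < t)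
  exact sub_pos.1 ((div_pos_iff_of_pos_right (pow_pos ht0 n)).1 ht)

theorem eventually_lt (hv : HasRadialLeadingTerm v n) (hw : (w ^ n).re < 0) :
    ∀ᶠ t : ℝ in 𝓝[>] 0, v (t * w) < v 0 := by
  filter_upwards [(hv w).eventually_lt_const hw, self_mem_nhdsWithin] with t ht (ht0 : 0 < t)
  exact sub_neg.1 (by simpa using (div_lt_iff₀ (pow_pos ht0 n)).1 ht)

theorem not_isLocalMax (hv : HasRadialLeadingTerm v n) : ¬ IsLocalMax v 0 := by
  intro hmax
  have hray : Tendsto (fun t : ℝ => (t * 1 : ℂ)) (𝓝[>] 0) (𝓝 0) :=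
    tendsto_nhdsWithin_of_tendsto_nhds (Continuous.tendsto' (by fun_prop) _ _ (by simp))
  obtain ⟨t, hle, hlt⟩ :=
    ((hray.eventually hmax).and (hv.eventually_gt (w := 1) (by simp))).exists
  exact hle.not_gt hlt

theorem two_le (hv : HasRadialLeadingTerm v n) (hd : HasFDerivAt v (0 : ℂ →L[ℝ] ℝ) 0) :
    2 ≤ n := by
  by_contra! hn
  have hline : HasDerivAt (fun t : ℝ => (t : ℂ)) 1 0 := ofRealCLM.hasDerivAt
  have hderiv : HasDerivAt (fun t : ℝ => v t) 0 0 :=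
    (ofReal_zero ▸ hd : HasFDerivAt v (0 : ℂ →L[ℝ] ℝ) ((0 : ℝ) : ℂ)).comp_hasDerivAt 0 hline
  have hslope : Tendsto (fun t : ℝ => t⁻¹ * (v t - v 0)) (𝓝[>] 0) (𝓝 0) := by
    simpa using hderiv.tendsto_slope_zero_right
  have hpow : Tendsto (fun t : ℝ => t ^ (1 - n)) (𝓝[>] 0) (𝓝 (0 ^ (1 - n))) :=
    ((continuous_pow (1 - n)).tendsto 0).mono_left nhdsWithin_le_nhds
  have hzero : Tendsto (fun t : ℝ => (v (t * 1) - v 0) / t ^ n) (𝓝[>] 0) (𝓝 0) := by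
    have hprod := hpow.mul hslope
    rw [mul_zero] at hprod
    refine hprod.congr' ?_
    filter_upwards [self_mem_nhdsWithin] with t (ht : 0 < t)
    have hsplit : t ^ (1 - n) * t ^ n = t := by rw [← pow_add, Nat.sub_add_cancel (by lia), pow_one]
    rw [mul_one, eq_div_iff (pow_pos ht n).ne']
    rw [mul_right_comm, hsplit, mul_inv_cancel_left₀ ht.ne']
  simpa using tendsto_nhds_unique hzero (hv 1)

end HasRadialLeadingTerm

theorem eventually_ofReal_mul_mem {D : Set ℂ} (hD : D ∈ 𝓝 0) (w : ℂ) :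
    ∀ᶠ t : ℝ in 𝓝[>] 0, t * w ∈ D :=
  nhdsWithin_le_nhds ((Continuous.tendsto' (by fun_prop) (0 : ℝ) (0 : ℂ) (by simp)) hD)

theorem le_of_mem_segment_of_forall_ray_le {v : ℂ → ℝ} {w : ℂ} {R : ℝ}
    (hray : ∀ t ∈ Ioc 0 R, v (t * w) ≤ v 0) (hR : 0 < R) {z : ℂ}
    (hz : z ∈ segment ℝ 0 (R * w)) : v z ≤ v 0 := by
  rw [segment_eq_image] at hz
  obtain ⟨x, hx, rfl⟩ := hz
  simp only [smul_zero, zero_add, real_smul, ← mul_assoc, ← ofReal_mul]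
  rcases hx.1.eq_or_lt with rfl | hx0
  · simp
  · exact hray _ ⟨by positivity, mul_le_of_le_one_left hR.le hx.2⟩

namespace HasRadialLeadingTerm

variable {v : ℂ → ℝ} {n : ℕ}

theorem exists_isPreconnected_le (hv : HasRadialLeadingTerm v n) {D : Set ℂ} (hD : D ∈ 𝓝 0)
    (hsub : JoinedSublevels v D) {w w' : ℂ} (hw : (w ^ n).re < 0) (hw' : (w' ^ n).re < 0) :
    ∃ R : ℝ, 0 ≤ R ∧ ∃ T, IsClosed T ∧ IsPreconnected T ∧ 0 ∉ T ∧ R * w ∈ T ∧ R * w' ∈ T ∧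
      ∀ z ∈ T ∪ (segment ℝ 0 (R * w) ∪ segment ℝ 0 (R * w')), v z ≤ v 0 := by
  obtain ⟨R, hR, hray⟩ := mem_nhdsGT_iff_exists_Ioc_subset.1 <|
    (hv.eventually_lt hw).and <| (hv.eventually_lt hw').and <|
      (eventually_ofReal_mul_mem hD w).and (eventually_ofReal_mul_mem hD w')
  obtain ⟨hRw, hRw', hRD, hRD'⟩ := hray ⟨hR, le_rfl⟩
  obtain ⟨c, hc, hc0⟩ := exists_between (max_lt hRw hRw')
  obtain ⟨T, hTc, hT, hwT, hwT', hTv⟩ := hsub c _ hRD _ hRD' (max_lt_iff.1 hc).1 (max_lt_iff.1 hc).2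
  refine ⟨R, le_of_lt hR, T, hTc, hT, fun h => (hTv 0 h).not_gt hc0, hwT, hwT', ?_⟩
  rintro z (hz | hz | hz)
  · exact (hTv z hz).trans hc0.le
  · exact le_of_mem_segment_of_forall_ray_le (fun t ht => (hray ht).1.le) hR hz
  · exact le_of_mem_segment_of_forall_ray_le (fun t ht => (hray ht).2.1.le) hR hz

/- For `n ≥ 2` the high rays `1` and `conj ω ^ 2` are separated by the low rays `ω` and `conj ω`. -/
theorem lt_two (hv : HasRadialLeadingTerm v n) {D : Set ℂ} (hD : D ∈ 𝓝 0)
    (hsub : JoinedSublevels v D) (hsup : JoinedSublevels (-v) D) : n < 2 := by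
  by_contra! hn
  obtain ⟨ω, hω, hnorm, hre, him⟩ := exists_unit_pow_eq_neg_one hn
  have hω' : conj ω ^ n = -1 := by rw [← map_pow, hω, map_neg, map_one]
  have hω2 : (conj ω ^ 2) ^ n = 1 := by rw [pow_right_comm, hω', neg_one_sq]
  obtain ⟨R, hR, T, hTc, hT, h0, hwT, hwT', hlow⟩ :=
    hv.exists_isPreconnected_le hD hsub (w := ω) (w' := conj ω) (by simp [hω]) (by simp [hω'])
  obtain ⟨ρ, hcross, hρ, hρ', hρD, hρD'⟩ :=
    ((eventually_not_disjoint_wedge hTc hT h0 hnorm hre him hR hwT hwT').and <|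
      (hv.eventually_gt (w := 1) (by simp)).and <|
      (hv.eventually_gt (w := conj ω ^ 2) (by simp [hω2])).and <|
      (eventually_ofReal_mul_mem hD 1).and (eventually_ofReal_mul_mem hD (conj ω ^ 2))).exists
  rw [mul_one] at hρ hρD
  obtain ⟨c, hc0, hc⟩ := exists_between (lt_min hρ hρ')
  obtain ⟨S, -, hS, hρS, hρS', hhigh⟩ := hsup (-c) _ hρD _ hρD'
    (neg_lt_neg (lt_min_iff.1 hc).1) (neg_lt_neg (lt_min_iff.1 hc).2)
  refine hcross S hS hρS hρS' (disjoint_left.2 fun z hzS hz => ?_)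
  exact (hc0.trans_le (neg_le_neg_iff.1 (hhigh z hzS))).not_ge (hlow z hz)

end HasRadialLeadingTerm

theorem exists_analyticAt_re_eventuallyEq {u : ℂ → ℝ} {p : ℂ} (hu : HarmonicAt u p) :
    ∃ F : ℂ → ℂ, AnalyticAt ℂ F p ∧ ∀ᶠ z in 𝓝 p, (F z).re = u z := by
  obtain ⟨ε, hε, hball⟩ := Metric.isOpen_iff.1 (isOpen_setOfPred_harmonicAt (f := u)) p hu
  obtain ⟨F, hF, hFu⟩ := HarmonicOnNhd.exists_analyticOnNhd_ball_re_eq fun _ hy => hball hy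
  exact ⟨F, hF p (mem_ball_self hε), eventually_of_mem (ball_mem_nhds p hε) hFu⟩

theorem exists_pow_mul_eventuallyEq_re_sub {u : ℂ → ℝ} {p : ℂ} (hu : HarmonicAt u p)
    (hnc : ¬ ∀ᶠ z in 𝓝 p, u z = u p) :
    ∃ n ≠ 0, ∃ g : ℂ → ℂ, ContinuousAt g p ∧ g p ≠ 0 ∧
      ∀ᶠ z in 𝓝 p, u z - u p = ((z - p) ^ n * g z).re := by
  obtain ⟨F, hF, hFu⟩ := exists_analyticAt_re_eventuallyEq hu
  have hFp : (F p).re = u p := hFu.self_of_nhds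
  have hFnc : ¬ ∀ᶠ z in 𝓝 p, F z - F p = 0 := by
    intro hconst
    apply hnc
    filter_upwards [hconst, hFu] with z hz hzu
    rw [← hzu, sub_eq_zero.1 hz, hFp]
  have hdiff : AnalyticAt ℂ (fun z => F z - F p) p := hF.sub analyticAt_const
  obtain ⟨n, g, hg, hg0, hgF⟩ := hdiff.exists_eventuallyEq_pow_smul_nonzero_iff.2 hFnc
  refine ⟨n, ?_, g, hg.continuousAt, hg0, ?_⟩
  · rintro rfl
    have hzero : F p - F p = (p - p) ^ 0 • g p := hgF.self_of_nhds
    exact hg0 (by simpa using hzero.symm)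
  · filter_upwards [hgF, hFu] with z hz hzu
    rw [← smul_eq_mul, ← hz, sub_re, hzu, hFp]

theorem exists_hasRadialLeadingTerm {u : ℂ → ℝ} {p : ℂ} (hu : HarmonicAt u p)
    (hnc : ¬ ∀ᶠ z in 𝓝 p, u z = u p) :
    ∃ n : ℕ, ∃ e ≠ 0, HasRadialLeadingTerm (fun ζ => u (p + e * ζ)) n := by
  obtain ⟨n, hn, g, hg, hg0, hgu⟩ := exists_pow_mul_eventuallyEq_re_sub hu hnc
  obtain ⟨e, he⟩ := IsAlgClosed.exists_pow_nat_eq (g p)⁻¹ (Nat.pos_of_ne_zero hn)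
  have he0 : e ≠ 0 := by
    rintro rfl
    exact inv_ne_zero hg0 (by rw [← he, zero_pow hn])
  refine ⟨n, e, he0, fun w => ?_⟩
  have hray : Tendsto (fun t : ℝ => p + e * (t * w)) (𝓝[>] 0) (𝓝 p) :=
    tendsto_nhdsWithin_of_tendsto_nhds (Continuous.tendsto' (by fun_prop) _ _ (by simp))
  have hlim : Tendsto (fun t : ℝ => (e ^ n * w ^ n * g (p + e * (t * w))).re) (𝓝[>] 0)
      (𝓝 (w ^ n).re) := by
    have hval : e ^ n * w ^ n * g p = w ^ n := by
      rw [he]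
      field_simp
    have := (hg.tendsto.comp hray).const_mul (e ^ n * w ^ n)
    rw [hval] at this
    exact (continuous_re.tendsto _).comp this
  refine hlim.congr' ?_
  filter_upwards [hray.eventually hgu, self_mem_nhdsWithin] with t ht (ht0 : 0 < t)
  rw [mul_zero, add_zero, ht, eq_div_iff (pow_pos ht0 n).ne', mul_comm, ← re_ofReal_mul,
    add_sub_cancel_left, ofReal_pow]
  ring_nf

theorem not_isLocalMax_of_harmonicAt {u : ℂ → ℝ} {p : ℂ} (hu : HarmonicAt u p)
    (hnc : ¬ ∀ᶠ z in 𝓝 p, u z = u p) : ¬ IsLocalMax u p := by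
  intro hmax
  obtain ⟨n, e, -, hv⟩ := exists_hasRadialLeadingTerm hu hnc
  have hcont : Tendsto (fun ζ => p + e * ζ) (𝓝 0) (𝓝 p) :=
    Continuous.tendsto' (by fun_prop) _ _ (by simp)
  apply hv.not_isLocalMax
  filter_upwards [hcont.eventually hmax] with ζ hζ
  simpa using hζ

theorem not_eventually_eq_of_harmonicOnNhd {Ω : Set ℂ} (hΩ : IsPreconnected Ω) {u : ℂ → ℝ}
    (hu : HarmonicOnNhd u Ω) (huc : ContinuousOn u (closure Ω)) {x y : ℂ} (hx : x ∈ closure Ω)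
    (hy : y ∈ closure Ω) (hxy : u x ≠ u y) {p : ℂ} (hp : p ∈ Ω) :
    ¬ ∀ᶠ z in 𝓝 p, u z = u p := by
  intro hconst
  have hana : AnalyticOnNhd ℝ u Ω := fun z hz => HarmonicAt.analyticAt (hu z hz)
  have heq : EqOn u (fun _ => u p) Ω :=
    hana.eqOn_of_preconnected_of_eventuallyEq analyticOnNhd_const hΩ hp hconst
  have heq' : EqOn u (fun _ => u p) (closure Ω) :=
    heq.of_subset_closure huc continuousOn_const subset_closure subset_rfl
  exact hxy ((heq' hx).trans (heq' hy).symm)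

theorem HarmonicOnSet.harmonicOnNhd {u : ℂ → ℝ} {Ω : Set ℂ} (hu : HarmonicOnSet u Ω)
    (hΩ : IsOpen Ω) : HarmonicOnNhd u Ω := by
  have hC2 : ∀ z ∈ Ω, ContDiffAt ℝ 2 u z := fun z hz => hu.1.contDiffAt (hΩ.mem_nhds hz)
  intro p hp
  refine ⟨hC2 p hp, ?_⟩
  filter_upwards [hΩ.mem_nhds hp] with z hz
  have hd : DifferentiableAt ℝ (fderiv ℝ u) z :=
    ((hC2 z hz).fderiv_right (m := 1) (by norm_num)).differentiableAt (by norm_num)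
  have hsecond : ∀ a : ℂ, fderiv ℝ (fun z => fderiv ℝ u z a) z a = fderiv ℝ (fderiv ℝ u) z a a := by
    intro a
    simp [fderiv_clm_apply hd (differentiableAt_const a)]
  have hlap := hu.2 z hz
  rw [hsecond, hsecond] at hlap
  simpa [laplacian_eq_iteratedFDeriv_complexPlane, iteratedFDeriv_two_apply] using hlap

theorem fderiv_ne_zero_of_joinedSublevels {Ω : Set ℂ} {u : ℂ → ℝ} {p : ℂ} (hΩ : Ω ∈ 𝓝 p)
    (hu : HarmonicAt u p) (hnc : ¬ ∀ᶠ z in 𝓝 p, u z = u p) (hsub : JoinedSublevels u Ω)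
    (hsup : JoinedSublevels (-u) Ω) : fderiv ℝ u p ≠ 0 := by
  intro hcrit
  obtain ⟨n, e, he, hv⟩ := exists_hasRadialLeadingTerm hu hnc
  let A : ℂ ≃ₜ ℂ := (Homeomorph.mulLeft₀ e he).trans (Homeomorph.addLeft p)
  have hA0 : A 0 = p := by simp [A]
  have hderiv : HasFDerivAt (fun ζ => u (p + e * ζ)) (0 : ℂ →L[ℝ] ℝ) 0 := by
    have hup : HasFDerivAt u (0 : ℂ →L[ℝ] ℝ) (A 0) := by
      rw [hA0, ← hcrit]
      exact (hu.1.differentiableAt two_ne_zero).hasFDerivAt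
    have hAd : DifferentiableAt ℝ A 0 := by
      change DifferentiableAt ℝ (fun ζ : ℂ => p + e * ζ) 0
      fun_prop
    simpa using! hup.comp 0 hAd.hasFDerivAt
  exact (hv.two_le hderiv).not_gt (hv.lt_two (A.continuous.continuousAt.preimage_mem_nhds
    (hA0 ▸ hΩ)) (hsub.comp_homeomorph A) (hsup.comp_homeomorph A))

theorem fderiv_ne_zero_of_isPreconnected_frontier {Ω : Set ℂ} (hΩo : IsOpen Ω)
    (hΩb : Bornology.IsBounded Ω) (hΩ : IsPreconnected Ω) {u : ℂ → ℝ} (hu : HarmonicOnNhd u Ω)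
    (huc : ContinuousOn u (closure Ω)) (hsub : ∀ c, IsPreconnected {z ∈ frontier Ω | u z ≤ c})
    (hsup : ∀ c, IsPreconnected {z ∈ frontier Ω | c ≤ u z}) {x y : ℂ} (hx : x ∈ closure Ω)
    (hy : y ∈ closure Ω) (hxy : u x ≠ u y) {p : ℂ} (hp : p ∈ Ω) : fderiv ℝ u p ≠ 0 := by
  have hnc : ∀ m ∈ Ω, ¬ ∀ᶠ z in 𝓝 m, u z = u m := fun m hm =>
    not_eventually_eq_of_harmonicOnNhd hΩ hu huc hx hy hxy hm
  have hmax : ∀ m ∈ Ω, ¬ IsLocalMax u m := fun m hm =>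
    not_isLocalMax_of_harmonicAt (hu m hm) (hnc m hm)
  have hmin : ∀ m ∈ Ω, ¬ IsLocalMax (-u) m := fun m hm =>
    not_isLocalMax_of_harmonicAt (hu.neg m hm) (by simpa using hnc m hm)
  refine fderiv_ne_zero_of_joinedSublevels (hΩo.mem_nhds hp) (hu p hp) (hnc p hp)
    (joinedSublevels_of_isPreconnected_frontier hΩo hΩb.isCompact_closure huc
      (fun m hm h => hmin m hm h.neg) hsub)
    (joinedSublevels_of_isPreconnected_frontier hΩo hΩb.isCompact_closure huc.neg
      (fun m hm h => hmax m hm (by simpa using h.neg)) fun c => ?_)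
  simpa [neg_le] using hsup (-c)

/-! ### Boundary values on a parametrized curve -/

theorem isPreconnected_sphere_inter_le_re (c : ℝ) :
    IsPreconnected {w ∈ sphere (0 : ℂ) 1 | c ≤ w.re} := by
  have himage : {w ∈ sphere (0 : ℂ) 1 | c ≤ w.re} =
      (fun x : ℝ => exp (x * I)) '' {x ∈ Icc (-Real.pi) Real.pi | c ≤ Real.cos x} := by
    ext w
    constructor
    · rintro ⟨hw, hwc⟩
      have harg : exp (arg w * I) = w := by
        simpa [mem_sphere_zero_iff_norm.1 hw] using norm_mul_exp_arg_mul_I w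
      refine ⟨arg w, ⟨⟨(neg_pi_lt_arg w).le, arg_le_pi w⟩, ?_⟩, harg⟩
      rwa [← exp_ofReal_mul_I_re, harg]
    · rintro ⟨x, ⟨-, hx⟩, rfl⟩
      exact ⟨by simp, by rwa [exp_ofReal_mul_I_re]⟩
  rw [himage]
  refine IsPreconnected.image (OrdConnected.isPreconnected ⟨?_⟩) _ (by fun_prop)
  rintro x ⟨hx, hxc⟩ y ⟨hy, hyc⟩ z ⟨hxz, hzy⟩
  refine ⟨⟨hx.1.trans hxz, hzy.trans hy.2⟩, ?_⟩
  rcases le_total 0 z with hz | hz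
  · exact hyc.trans (Real.cos_le_cos_of_nonneg_of_le_pi hz hy.2 hzy)
  · rw [← Real.cos_neg] at hxc ⊢
    exact hxc.trans (Real.cos_le_cos_of_nonneg_of_le_pi (neg_nonneg.2 hz) (neg_le.1 hx.1)
      (neg_le_neg hxz))

theorem isPreconnected_sphere_inter_le_re_mul {a : ℂ} (ha : ‖a‖ = 1) (c : ℝ) :
    IsPreconnected {w ∈ sphere (0 : ℂ) 1 | c ≤ (a * w).re} := by
  have ha0 : a ≠ 0 := norm_ne_zero_iff.1 (by simp [ha])
  have hrot : {w ∈ sphere (0 : ℂ) 1 | c ≤ (a * w).re} =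
      Homeomorph.mulLeft₀ a ha0 ⁻¹' {w ∈ sphere (0 : ℂ) 1 | c ≤ w.re} := by
    ext w
    simp [ha]
  rw [hrot]
  exact (Homeomorph.isPreconnected_preimage _).2 (isPreconnected_sphere_inter_le_re c)

theorem isPreconnected_image_sphere_inter_le {γ : ℂ → ℂ} (hγ : ContinuousOn γ (sphere 0 1))
    {u : ℂ → ℝ} {a : ℂ} (ha : ‖a‖ = 1) (hu : ∀ w ∈ sphere 0 1, u (γ w) = (a * w).re) (c : ℝ) :
    IsPreconnected {z ∈ γ '' sphere 0 1 | c ≤ u z} := by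
  have himage : {z ∈ γ '' sphere 0 1 | c ≤ u z} = γ '' {w ∈ sphere 0 1 | c ≤ (a * w).re} := by
    ext z
    constructor
    · rintro ⟨⟨w, hw, rfl⟩, hwc⟩
      exact ⟨w, ⟨hw, hu w hw ▸ hwc⟩, rfl⟩
    · rintro ⟨w, ⟨hw, hwc⟩, rfl⟩
      exact ⟨mem_image_of_mem γ hw, (hu w hw).symm ▸ hwc⟩
  rw [himage]
  exact (isPreconnected_sphere_inter_le_re_mul ha c).image γ (hγ.mono (sep_subset _ _))

theorem eq_re_mul_of_forall_exp_mul_I {f : ℂ → ℝ} {φ : ℝ}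
    (hf : ∀ θ : ℝ, f (exp (θ * I)) = Real.cos (θ - φ)) {w : ℂ} (hw : w ∈ sphere (0 : ℂ) 1) :
    f w = (exp ((-φ : ℝ) * I) * w).re := by
  have harg : exp (arg w * I) = w := by
    simpa [mem_sphere_zero_iff_norm.1 hw] using norm_mul_exp_arg_mul_I w
  rw [← harg, hf, ← exp_add, ← add_mul, ← ofReal_add, exp_ofReal_mul_I_re, neg_add_eq_sub]

theorem stmt_5_general {Ω : Set ℂ} (hΩo : IsOpen Ω) (hΩb : Bornology.IsBounded Ω)
    (hΩ : IsPreconnected Ω) {γ : ℂ → ℂ} (hγ : ContinuousOn γ (sphere 0 1))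
    (hΓ : frontier Ω = γ '' sphere 0 1) {φ : ℝ} {u : ℂ → ℝ} (huc : ContinuousOn u (closure Ω))
    (huh : HarmonicOnSet u Ω) (hub : ∀ θ : ℝ, u (γ (exp (θ * I))) = Real.cos (θ - φ)) :
    ∀ p ∈ Ω, gradient u p ≠ 0 := by
  intro p hp hgrad
  have hu : ∀ w ∈ sphere 0 1, u (γ w) = (exp ((-φ : ℝ) * I) * w).re := fun w hw =>
    eq_re_mul_of_forall_exp_mul_I (f := u ∘ γ) hub hw
  have hunit : ‖exp ((-φ : ℝ) * I)‖ = 1 := norm_exp_ofReal_mul_I _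
  have hmem : ∀ θ : ℝ, γ (exp (θ * I)) ∈ closure Ω := fun θ =>
    frontier_subset_closure (hΓ ▸ mem_image_of_mem γ (by simp))
  have hsup : ∀ c, IsPreconnected {z ∈ frontier Ω | c ≤ u z} := fun c =>
    hΓ ▸ isPreconnected_image_sphere_inter_le hγ hunit hu c
  have hsub : ∀ c, IsPreconnected {z ∈ frontier Ω | u z ≤ c} := fun c => by
    simpa [hΓ] using isPreconnected_image_sphere_inter_le (u := -u) hγ
      ((norm_neg _).trans hunit) (fun w hw => by simp [hu w hw]) (-c)
  have hvalues : u (γ (exp (φ * I))) ≠ u (γ (exp ((φ + Real.pi : ℝ) * I))) := by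
    rw [hub, hub, sub_self, add_sub_cancel_left, Real.cos_zero, Real.cos_pi]
    norm_num
  exact fderiv_ne_zero_of_isPreconnected_frontier hΩo hΩb hΩ (huh.harmonicOnNhd hΩo) huc hsub hsup
    (hmem _) (hmem _) hvalues hp (by simpa [gradient] using hgrad)

theorem stmt_5 (Ω : Set ℂ) (hΩo : IsOpen Ω) (hΩb : Bornology.IsBounded Ω)
    (hΩsc : SimplyConnectedSpace Ω)
    (γ : ℂ → ℂ) (hγinj : Set.InjOn γ (Metric.sphere (0 : ℂ) 1))
    (hγC2 : ContDiffOn ℝ 2 γ (Metric.sphere (0 : ℂ) 1))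
    (hΓ : frontier Ω = γ '' Metric.sphere (0 : ℂ) 1)
    (φ : ℝ) (hφ : φ ∈ Set.Ico (0 : ℝ) (2 * Real.pi))
    (u : ℂ → ℝ) (huc : ContinuousOn u (closure Ω)) (huh : HarmonicOnSet u Ω)
    (hub : ∀ θ : ℝ, u (γ (Complex.exp (θ * Complex.I))) = Real.cos (θ - φ)) :
    ∀ p ∈ Ω, gradient u p ≠ 0 :=
  stmt_5_general hΩo hΩb (isPreconnected_iff_preconnectedSpace.2 inferInstance) hγC2.continuousOn hΓ
    huc huh hub
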